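/- Let x₁, x₂, x₃, x₄ be the vertices, listed in cyclic order, of a strictly convex quadrilateral in the Euclidean plane, and write r_{i,j} = dist(x_i, x_j). Then δ(r_{1,2}, r_{1,3}, r_{2,3}) + δ(r_{1,3}, r_{1,4}, r_{3,4}) + δ(r_{1,2}, r_{1,4}, r_{2,4}) + δ(r_{2,3}, r_{2,4}, r_{3,4}) ≥ δ(r_{1,2}·r_{3,4}, r_{1,3}·r_{2,4}, r_{1,4}·r_{2,3}), where δ(a, b, c) = (a + b - c)(a + c - b)(b + c - a)/(2abc). -/

import Mathlib

/-!
Let the diagonals meet at `P` at angle `ω`, and put `2f = π - ω`. The diagonals cut the vertex angles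
into eight angles `pᵢ, qᵢ`, which pair up to `2f` or `π - 2f` in the four triangles around `P`.
Since `δ = cos A + cos B + cos C - 1` for a triangle with angles `A, B, C`
(`delta3_of_triangle`), the left-hand side is a sum of cosines of the `pᵢ, qᵢ` and of the vertex
angles. The angles of the Crelle triangle are `|p₂ - q₁|`, `|p₃ - q₂|` and the one whose cosine is
that of `p₂ + q₂ + p₄ + q₄` (`delta3_crelle`).

Write `p₁, p₃ = f + S ± D` and `p₂, p₄ = π/2 - f + T ± E`. Sum-to-product formulas turn the claim into
`cos f cos S cos D + sin f cos T cos E + sin D sin E sin (S - T) + cos (S - T) sin S sin T ≥ 1`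
(`sum_cos_sub_crelle`), where nonnegativity of the eight angles says exactly that `|S| + |D| ≤ f` and
`|T| + |E| ≤ π/2 - f`. Changing signs to the worst case (`core`), one may take `S ≥ 0 ≥ T` and
`D ≥ 0 ≥ E`. The left-hand side is then decreasing in `D` and `|E|`, and at the extreme values
`D = f - |S|`, `|E| = π/2 - f - |T|` it is identically `1` (`core_eq_one`).
-/


/-- `δ(a,b,c) = (a+b-c)(a+c-b)(b+c-a)/(2abc)`. -/
noncomputable def delta3 (a b c : ℝ) : ℝ :=
  (a + b - c) * (a + c - b) * (b + c - a) / (2 * a * b * c)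

/-- A strictly convex quadrilateral `x₁x₂x₃x₄` in the plane: no three vertices are collinear,
each vertex lies outside the convex hull of the other three, and the vertices are listed in
cyclic order (equivalently, the diagonals `x₁x₃` and `x₂x₄` meet). -/
def IsStrictConvexQuad (x₁ x₂ x₃ x₄ : EuclideanSpace ℝ (Fin 2)) : Prop :=
  ¬ Collinear ℝ ({x₁, x₂, x₃} : Set (EuclideanSpace ℝ (Fin 2))) ∧
  ¬ Collinear ℝ ({x₁, x₂, x₄} : Set (EuclideanSpace ℝ (Fin 2))) ∧
  ¬ Collinear ℝ ({x₁, x₃, x₄} : Set (EuclideanSpace ℝ (Fin 2))) ∧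
  ¬ Collinear ℝ ({x₂, x₃, x₄} : Set (EuclideanSpace ℝ (Fin 2))) ∧
  x₁ ∉ convexHull ℝ ({x₂, x₃, x₄} : Set (EuclideanSpace ℝ (Fin 2))) ∧
  x₂ ∉ convexHull ℝ ({x₁, x₃, x₄} : Set (EuclideanSpace ℝ (Fin 2))) ∧
  x₃ ∉ convexHull ℝ ({x₁, x₂, x₄} : Set (EuclideanSpace ℝ (Fin 2))) ∧
  x₄ ∉ convexHull ℝ ({x₁, x₂, x₃} : Set (EuclideanSpace ℝ (Fin 2))) ∧
  (segment ℝ x₁ x₃ ∩ segment ℝ x₂ x₄).Nonempty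

open Real EuclideanGeometry

/-! ### The trigonometric inequality -/

/-- The case of equality: the extreme values `D = f - S`, `E = π/2 - f - T` in `core_nonneg`. -/
theorem core_eq_one (f S T : ℝ) :
    cos f * cos S * cos (f - S) + sin f * cos T * sin (f + T)
      - sin (f - S) * cos (f + T) * sin (S + T) - cos (S + T) * sin S * sin T = 1 := by
  have h1 := sin_sq_add_cos_sq f
  have h2 := sin_sq_add_cos_sq S
  have h3 := sin_sq_add_cos_sq T
  simp only [cos_sub, sin_sub, cos_add, sin_add]
  generalize sin f = a at *; generalize cos f = a' at *
  generalize sin S = b at *; generalize cos S = b' at *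
  generalize sin T = c at *; generalize cos T = c' at *
  grind

/-- The inequality of `core` for the worst choice of signs, written with `-T` and `-E` in place of
`T` and `E`. The right-hand side decreases in `D` and in `E`, so the bound follows
from `core_eq_one`. -/
theorem core_nonneg {f S T D E : ℝ} (hS : 0 ≤ S) (hT : 0 ≤ T) (hD : 0 ≤ D) (hE : 0 ≤ E)
    (h1 : S + D ≤ f) (h2 : T + E ≤ π / 2 - f) :
    1 ≤ cos f * cos S * cos D + sin f * cos T * cos E
      - sin D * sin E * sin (S + T) - cos (S + T) * sin S * sin T := by
  have hπ := pi_pos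
  have hcD : cos (f - S) ≤ cos D := cos_le_cos_of_nonneg_of_le_pi hD (by linarith) (by linarith)
  have hcE : sin (f + T) ≤ cos E := by
    rw [← cos_pi_div_two_sub]
    exact cos_le_cos_of_nonneg_of_le_pi hE (by linarith) (by linarith)
  have hsD : sin D ≤ sin (f - S) := sin_le_sin_of_le_of_le_pi_div_two (by linarith) (by linarith) (by linarith)
  have hsE : sin E ≤ cos (f + T) := by
    rw [← sin_pi_div_two_sub]
    exact sin_le_sin_of_le_of_le_pi_div_two (by linarith) (by linarith) (by linarith)
  have hD0 : 0 ≤ sin D := sin_nonneg_of_nonneg_of_le_pi hD (by linarith)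
  have hE0 : 0 ≤ sin E := sin_nonneg_of_nonneg_of_le_pi hE (by linarith)
  have hST : 0 ≤ sin (S + T) := sin_nonneg_of_nonneg_of_le_pi (by linarith) (by linarith)
  have hf0 : 0 ≤ sin f := sin_nonneg_of_nonneg_of_le_pi (by linarith) (by linarith)
  have hf1 : 0 ≤ cos f := cos_nonneg_of_mem_Icc ⟨by linarith, by linarith⟩
  have hS1 : 0 ≤ cos S := cos_nonneg_of_mem_Icc ⟨by linarith, by linarith⟩
  have hT1 : 0 ≤ cos T := cos_nonneg_of_mem_Icc ⟨by linarith, by linarith⟩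
  have e1 := mul_le_mul_of_nonneg_left hcD (mul_nonneg hf1 hS1)
  have e2 := mul_le_mul_of_nonneg_left hcE (mul_nonneg hf0 hT1)
  have e3 := mul_le_mul_of_nonneg_right (mul_le_mul hsD hsE hE0 (hD0.trans hsD)) hST
  linarith [core_eq_one f S T]

/-- Passing to absolute values only lowers the right-hand side, so this reduces to `core_nonneg`. -/
theorem core {f S T D E : ℝ} (h1 : |S| + |D| ≤ f) (h2 : |T| + |E| ≤ π / 2 - f) :
    1 ≤ cos f * cos S * cos D + sin f * cos T * cos E
      + sin D * sin E * sin (S - T) + cos (S - T) * sin S * sin T := by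
  have key := core_nonneg (abs_nonneg S) (abs_nonneg T) (abs_nonneg D) (abs_nonneg E) h1 h2
  have := abs_nonneg S; have := abs_nonneg T; have := abs_nonneg D; have := abs_nonneg E
  have hS1 : 0 ≤ cos S := cos_nonneg_of_mem_Icc (abs_le.1 (by linarith))
  have hT1 : 0 ≤ cos T := cos_nonneg_of_mem_Icc (abs_le.1 (by linarith))
  have hs : ∀ x : ℝ, |x| ≤ π / 2 → sin |x| = |sin x| := fun x hx =>
    (abs_sin_eq_sin_abs_of_abs_le_pi (by linarith [pi_pos])).symm
  rw [cos_add, sin_add, hs S (by linarith), hs T (by linarith), hs D (by linarith),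
    hs E (by linarith)] at key
  simp only [cos_abs] at key
  rw [cos_sub, sin_sub]
  have n1 := neg_abs_le (sin D * sin E * sin S)
  have n2 := le_abs_self (sin D * sin E * sin T)
  have n3 := neg_abs_le (sin S * sin T)
  simp only [abs_mul] at n1 n2 n3
  have e1 := mul_le_mul_of_nonneg_right n1 hT1
  have e2 := mul_le_mul_of_nonneg_right n2 hS1
  have e3 := mul_le_mul_of_nonneg_right n3 (mul_nonneg hS1 hT1)
  have q1 := sq_abs (sin S)
  have q2 := sq_abs (sin T)
  have q3 : |sin S| ^ 2 * |sin T| ^ 2 = sin S ^ 2 * sin T ^ 2 := by rw [q1, q2]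
  linarith

/-- The difference of the two sides of the theorem, in the coordinates `f, S, T, D, E` on the angles:
the first four lines are `δ` of the four triangles and the fifth is `δ` of the Crelle triangle. -/
theorem sum_cos_sub_crelle (f S T D E : ℝ) :
    (cos (f + S + D) + cos (π / 2 - f - T - E) - cos ((f + S + D) + (π / 2 - f - T - E)) - 1)
    + (cos (π / 2 - f - T + E) + cos (f + S - D) - cos ((π / 2 - f - T + E) + (f + S - D)) - 1)
    + (cos (f - S - D) + cos (π / 2 - f + T - E) - cos ((f - S - D) + (π / 2 - f + T - E)) - 1)
    + (cos (π / 2 - f + T + E) + cos (f - S + D) - cos ((π / 2 - f + T + E) + (f - S + D)) - 1)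
    - (cos (2 * T) + cos (2 * S) - cos (2 * T - 2 * S) - 1)
    = 4 * (cos f * cos S * cos D + sin f * cos T * cos E
      + sin D * sin E * sin (S - T) + cos (S - T) * sin S * sin T - 1) := by
  have a1 : (f + S + D) + (π / 2 - f - T - E) = (S - T + (D - E)) + π / 2 := by ring
  have a2 : (π / 2 - f - T + E) + (f + S - D) = (S - T - (D - E)) + π / 2 := by ring
  have a3 : (f - S - D) + (π / 2 - f + T - E) = π / 2 - (S - T + (D + E)) := by ring
  have a4 : (π / 2 - f + T + E) + (f - S + D) = π / 2 - (S - T - (D + E)) := by ring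
  have b1 : π / 2 - f - T - E = π / 2 - (f + T + E) := by ring
  have b2 : π / 2 - f - T + E = π / 2 - (f + T - E) := by ring
  have b3 : π / 2 - f + T - E = π / 2 - (f - T + E) := by ring
  have b4 : π / 2 - f + T + E = π / 2 - (f - T - E) := by ring
  have c1 : 2 * T - 2 * S = - (2 * (S - T)) := by ring
  have hr : cos (2 * T) + cos (2 * S) - cos (2 * T - 2 * S) - 1
      = -4 * cos (S - T) * sin S * sin T := by
    have e1 : 2 * T = (S + T) - (S - T) := by ring
    have e2 : 2 * S = (S + T) + (S - T) := by ring
    have e3 : cos (2 * T) + cos (2 * S) = 2 * cos (S + T) * cos (S - T) := by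
      rw [e1, e2, cos_sub (S + T), cos_add (S + T)]; ring
    rw [e3, c1, cos_neg, cos_two_mul, cos_add S T, cos_sub S T]; ring
  rw [hr, a1, a2, a3, a4, b1, b2, b3, b4]
  simp only [cos_add_pi_div_two, cos_pi_div_two_sub]
  generalize S - T = R
  simp only [cos_add, sin_add, cos_sub, sin_sub]
  ring

/-- The trigonometric form of the theorem: `pᵢ` and `qᵢ` are the parts into which the diagonal at
the `i`-th vertex cuts the vertex angle, and `ω` is the angle between the diagonals. -/
theorem sum_cos_ge {ω p₁ p₂ p₃ p₄ q₁ q₂ q₃ q₄ : ℝ}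
    (hp₁ : 0 ≤ p₁) (hp₂ : 0 ≤ p₂) (hp₃ : 0 ≤ p₃) (hp₄ : 0 ≤ p₄)
    (hq₁ : 0 ≤ q₁) (hq₂ : 0 ≤ q₂) (hq₃ : 0 ≤ q₃) (hq₄ : 0 ≤ q₄)
    (h₁₂ : p₁ + q₂ + ω = π) (h₂₃ : p₂ + q₃ = ω) (h₃₄ : p₃ + q₄ + ω = π) (h₄₁ : p₄ + q₁ = ω) :
    cos (p₂ - q₁) + cos (p₃ - q₂) + cos (p₂ + q₂ + p₄ + q₄) - 1 ≤
      (cos p₁ + cos q₃ - cos (p₁ + q₃) - 1) + (cos q₁ + cos p₃ - cos (q₁ + p₃) - 1)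
      + (cos q₂ + cos p₄ - cos (q₂ + p₄) - 1) + (cos p₂ + cos q₄ - cos (p₂ + q₄) - 1) := by
  obtain ⟨f, hf⟩ : ∃ f, f = (π - ω) / 2 := ⟨_, rfl⟩
  obtain ⟨S, hS⟩ : ∃ S, S = (p₁ + p₃) / 2 - f := ⟨_, rfl⟩
  obtain ⟨D, hD⟩ : ∃ D, D = (p₁ - p₃) / 2 := ⟨_, rfl⟩
  obtain ⟨T, hT⟩ : ∃ T, T = (p₂ + p₄) / 2 - (π / 2 - f) := ⟨_, rfl⟩
  obtain ⟨E, hE⟩ : ∃ E, E = (p₂ - p₄) / 2 := ⟨_, rfl⟩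
  have b₁ : |S| + |D| ≤ f := by
    rcases abs_cases S with ⟨h, _⟩ | ⟨h, _⟩ <;> rcases abs_cases D with ⟨h', _⟩ | ⟨h', _⟩ <;>
      rw [h, h'] <;> linarith
  have b₂ : |T| + |E| ≤ π / 2 - f := by
    rcases abs_cases T with ⟨h, _⟩ | ⟨h, _⟩ <;> rcases abs_cases E with ⟨h', _⟩ | ⟨h', _⟩ <;>
      rw [h, h'] <;> linarith
  have e₁ : p₁ = f + S + D := by linarith
  have e₃ : p₃ = f + S - D := by linarith
  have e₂ : p₂ = π / 2 - f + T + E := by linarith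
  have e₄ : p₄ = π / 2 - f + T - E := by linarith
  have g₂ : q₂ = f - S - D := by linarith
  have g₄ : q₄ = f - S + D := by linarith
  have g₃ : q₃ = π / 2 - f - T - E := by linarith
  have g₁ : q₁ = π / 2 - f - T + E := by linarith
  have c₁ : p₂ - q₁ = 2 * T := by linarith
  have c₂ : p₃ - q₂ = 2 * S := by linarith
  have c₃ : p₂ + q₂ + p₄ + q₄ = 2 * T - 2 * S + π := by linarith
  rw [c₁, c₂, c₃, cos_add_pi, e₁, e₂, e₃, e₄, g₁, g₂, g₃, g₄]
  linarith [core b₁ b₂, sum_cos_sub_crelle f S T D E]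

/-! ### `δ` in terms of angles -/

theorem delta3_rotate (a b c : ℝ) : delta3 a b c = delta3 b c a := by
  unfold delta3
  congr 1 <;> ring

theorem delta3_swap (a b c : ℝ) : delta3 a b c = delta3 b a c := by
  unfold delta3
  congr 1 <;> ring

/-- `δ + 1` is the sum of the cosines `u, v, w` of the angles opposite `x, y, z`. These are only
required to satisfy the law of cosines, so degenerate triangles are allowed. -/
theorem delta3_of_cos {x y z u v w : ℝ} (hx : x ≠ 0) (hy : y ≠ 0) (hz : z ≠ 0)
    (hu : y ^ 2 + z ^ 2 - x ^ 2 = 2 * (y * z * u)) (hv : x ^ 2 + z ^ 2 - y ^ 2 = 2 * (x * z * v))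
    (hw : x ^ 2 + y ^ 2 - z ^ 2 = 2 * (x * y * w)) :
    delta3 x y z = u + w + v - 1 := by
  unfold delta3
  rw [div_eq_iff (by positivity)]
  linear_combination x * hu + y * hv + z * hw

/-- `δ` of a triangle with base `y` and base angles `α` (next to the side `x`) and `γ` (next to
the side `z`); the third angle has cosine `-cos (α + γ)`. The hypotheses say that the projections of
`x` and `z` to the base add up to `y` and that the two expressions for the altitude agree. -/
theorem delta3_of_triangle {x y z α γ : ℝ} (hx : x ≠ 0) (hy : y ≠ 0) (hz : z ≠ 0)
    (hb : y = x * cos α + z * cos γ) (ha : x * sin α = z * sin γ) :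
    delta3 x y z = cos α + cos γ - cos (α + γ) - 1 := by
  have h1 := sin_sq_add_cos_sq α
  have h2 := sin_sq_add_cos_sq γ
  have h3 : x ^ 2 - z ^ 2 = (x * cos α) ^ 2 - (z * cos γ) ^ 2 := by
    linear_combination (-x ^ 2) * h1 + z ^ 2 * h2 + (x * sin α + z * sin γ) * ha
  have key : delta3 x y z = cos γ + cos α + -cos (α + γ) - 1 := by
    apply delta3_of_cos hx hy hz
    · linear_combination (y - (x * cos α + z * cos γ) + 2 * (x * cos α)) * hb - h3
    · rw [cos_add]
      linear_combination (-(y + x * cos α + z * cos γ)) * hb - x ^ 2 * h1 - z ^ 2 * h2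
        + (x * sin α - z * sin γ) * ha
    · linear_combination (y - (x * cos α + z * cos γ) + 2 * (z * cos γ)) * hb + h3
  rw [key]; ring

/-- `δ` of the Crelle triangle. Here `a, b, c, d` are the distances from the vertices to the
intersection point of the diagonals, and `K, s` the cosine and sine of the angle between the
diagonals. The angles opposite `r₁₂ r₃₄` and `r₁₄ r₂₃` are `|p₂ - q₁|` and `|p₃ - q₂|`; the cosine
of the angle opposite the product of the diagonals is that of the sum of the vertex angles at
`x₂` and `x₄`. -/
theorem delta3_crelle {a b c d K s r₁₂ r₂₃ r₃₄ r₁₄ p₂ p₃ p₄ q₁ q₂ q₄ : ℝ}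
    (hac : a + c ≠ 0) (hbd : b + d ≠ 0)
    (h₁₂ : r₁₂ ≠ 0) (h₂₃ : r₂₃ ≠ 0) (h₃₄ : r₃₄ ≠ 0) (h₁₄ : r₁₄ ≠ 0) (hK : s ^ 2 + K ^ 2 = 1)
    (e₁₂ : r₁₂ ^ 2 = a ^ 2 + b ^ 2 - 2 * a * b * K) (e₂₃ : r₂₃ ^ 2 = b ^ 2 + c ^ 2 + 2 * b * c * K)
    (e₃₄ : r₃₄ ^ 2 = c ^ 2 + d ^ 2 - 2 * c * d * K) (e₁₄ : r₁₄ ^ 2 = a ^ 2 + d ^ 2 + 2 * a * d * K)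
    (cq₂ : r₁₂ * cos q₂ = b - a * K) (sq₂ : r₁₂ * sin q₂ = a * s)
    (cp₂ : r₂₃ * cos p₂ = b + c * K) (sp₂ : r₂₃ * sin p₂ = c * s)
    (cp₃ : r₃₄ * cos p₃ = c - d * K) (sp₃ : r₃₄ * sin p₃ = d * s)
    (cq₄ : r₃₄ * cos q₄ = d - c * K) (sq₄ : r₃₄ * sin q₄ = c * s)
    (cp₄ : r₁₄ * cos p₄ = d + a * K) (sp₄ : r₁₄ * sin p₄ = a * s)
    (cq₁ : r₁₄ * cos q₁ = a + d * K) (sq₁ : r₁₄ * sin q₁ = d * s) :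
    delta3 (r₁₂ * r₃₄) ((a + c) * (b + d)) (r₁₄ * r₂₃) =
      cos (p₂ - q₁) + cos (p₃ - q₂) + cos (p₂ + q₂ + p₄ + q₄) - 1 := by
  have hs : s ^ 2 = 1 - K ^ 2 := by linarith
  apply delta3_of_cos (by positivity) (by positivity) (by positivity)
  · have h : r₁₄ * r₂₃ * cos (p₂ - q₁) = (b + c * K) * (a + d * K) + c * d * s ^ 2 := by
      rw [cos_sub, show c * d * s ^ 2 = (c * s) * (d * s) by ring, ← cp₂, ← cq₁, ← sp₂, ← sq₁]
      ring
    rw [mul_assoc ((a + c) * (b + d)), h, mul_pow r₁₄, mul_pow r₁₂, e₁₂, e₂₃, e₃₄, e₁₄, hs]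
    ring
  · have h₁ : r₁₂ * r₂₃ * cos (p₂ + q₂) = (b + c * K) * (b - a * K) - c * a * s ^ 2 := by
      rw [cos_add, show c * a * s ^ 2 = (c * s) * (a * s) by ring, ← cp₂, ← cq₂, ← sp₂, ← sq₂]
      ring
    have h₂ : r₁₂ * r₂₃ * sin (p₂ + q₂) = s * b * (a + c) := by
      rw [sin_add]
      linear_combination (r₁₂ * cos q₂) * sp₂ + c * s * cq₂ + (r₁₂ * sin q₂) * cp₂
        + (b + c * K) * sq₂
    have h₃ : r₁₄ * r₃₄ * cos (p₄ + q₄) = (d + a * K) * (d - c * K) - a * c * s ^ 2 := by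
      rw [cos_add, show a * c * s ^ 2 = (a * s) * (c * s) by ring, ← cp₄, ← cq₄, ← sp₄, ← sq₄]
      ring
    have h₄ : r₁₄ * r₃₄ * sin (p₄ + q₄) = s * d * (a + c) := by
      rw [sin_add]
      linear_combination (r₃₄ * cos q₄) * sp₄ + a * s * cq₄ + (r₃₄ * sin q₄) * cp₄
        + (d + a * K) * sq₄
    have h : r₁₂ * r₃₄ * (r₁₄ * r₂₃) * cos (p₂ + q₂ + p₄ + q₄) =
        ((b + c * K) * (b - a * K) - c * a * s ^ 2) * ((d + a * K) * (d - c * K) - a * c * s ^ 2)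
          - s ^ 2 * b * d * (a + c) ^ 2 := by
      rw [show p₂ + q₂ + p₄ + q₄ = (p₂ + q₂) + (p₄ + q₄) by ring, cos_add,
        show s ^ 2 * b * d * (a + c) ^ 2 = (s * b * (a + c)) * (s * d * (a + c)) by ring,
        ← h₁, ← h₂, ← h₃, ← h₄]
      ring
    rw [h, mul_pow r₁₄, mul_pow r₁₂, e₁₂, e₂₃, e₃₄, e₁₄, hs]
    ring
  · have h : r₁₂ * r₃₄ * cos (p₃ - q₂) = (c - d * K) * (b - a * K) + d * a * s ^ 2 := by
      rw [cos_sub, show d * a * s ^ 2 = (d * s) * (a * s) by ring, ← cp₃, ← cq₂, ← sp₃, ← sq₂]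
      ring
    rw [show r₁₂ * r₃₄ * ((a + c) * (b + d)) * cos (p₃ - q₂)
        = (a + c) * (b + d) * (r₁₂ * r₃₄ * cos (p₃ - q₂)) by ring, h, mul_pow r₁₄, mul_pow r₁₂,
      e₁₂, e₂₃, e₃₄, e₁₄, hs]
    ring

/-! ### The quadrilateral -/

/-- The projection of `AB` to the line `AP` and the distance from `B` to that line, computed from the
angle at `P`. -/
theorem dist_mul_cos_sin {A B P : EuclideanSpace ℝ (Fin 2)} (hA : A ≠ P) :
    dist A B * cos (∠ P A B) = dist A P - dist B P * cos (∠ A P B) ∧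
      dist A B * sin (∠ P A B) = dist B P * sin (∠ A P B) := by
  have h₁ := law_cos A P B
  have h₂ := law_cos P A B
  have h₃ := law_sin A P B
  have h₄ : 2 * dist A P ≠ 0 := mul_ne_zero two_ne_zero (dist_ne_zero.2 hA)
  rw [dist_comm P B, dist_comm P A, dist_comm B A] at h₂
  rw [dist_comm P B, angle_comm B A P, dist_comm B A] at h₃
  constructor
  · apply mul_left_cancel₀ h₄
    linarith
  · linarith

/-- The triangles `ABP` around the intersection point `P`. -/
theorem small_triangle {A B P : EuclideanSpace ℝ (Fin 2)} (hA : A ≠ P) (hB : B ≠ P) :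
    ∠ P A B + ∠ P B A + ∠ A P B = π ∧
    dist A B ^ 2 = dist A P ^ 2 + dist B P ^ 2 - 2 * dist A P * dist B P * cos (∠ A P B) ∧
    dist A B * cos (∠ P A B) = dist A P - dist B P * cos (∠ A P B) ∧
    dist A B * sin (∠ P A B) = dist B P * sin (∠ A P B) ∧
    dist A B * cos (∠ P B A) = dist B P - dist A P * cos (∠ A P B) ∧
    dist A B * sin (∠ P B A) = dist A P * sin (∠ A P B) := by
  obtain ⟨h₁, h₂⟩ := dist_mul_cos_sin (B := B) hA
  obtain ⟨h₃, h₄⟩ := dist_mul_cos_sin (B := A) hB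
  rw [dist_comm B A, angle_comm B P A] at h₃ h₄
  refine ⟨?_, ?_, h₁, h₂, h₃, h₄⟩
  · have := angle_add_angle_add_angle_eq_pi B hA
    rw [angle_comm B P A, angle_comm A B P] at this
    linarith
  · linarith [law_cos A P B]

/-- The theorem, with the intersection point `P` of the diagonals given. -/
theorem sum_delta_ge_of_sbtw {x₁ x₂ x₃ x₄ P : EuclideanSpace ℝ (Fin 2)}
    (h₁₃ : Sbtw ℝ x₁ P x₃) (h₂₄ : Sbtw ℝ x₂ P x₄)
    (n₁₂ : x₁ ≠ x₂) (n₂₃ : x₂ ≠ x₃) (n₃₄ : x₃ ≠ x₄) (n₁₄ : x₁ ≠ x₄) :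
    delta3 (dist x₁ x₂) (dist x₁ x₃) (dist x₂ x₃) +
      delta3 (dist x₁ x₃) (dist x₁ x₄) (dist x₃ x₄) +
      delta3 (dist x₁ x₂) (dist x₁ x₄) (dist x₂ x₄) +
      delta3 (dist x₂ x₃) (dist x₂ x₄) (dist x₃ x₄) ≥
    delta3 (dist x₁ x₂ * dist x₃ x₄) (dist x₁ x₃ * dist x₂ x₄) (dist x₁ x₄ * dist x₂ x₃) := by
  have m₁ : x₁ ≠ P := h₁₃.ne_left.symm
  have m₂ : x₂ ≠ P := h₂₄.ne_left.symm
  have m₃ : x₃ ≠ P := h₁₃.ne_right.symm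
  have m₄ : x₄ ≠ P := h₂₄.ne_right.symm
  have w₃₄ : ∠ x₃ P x₄ = ∠ x₁ P x₂ :=
    (angle_eq_angle_of_angle_eq_pi_of_angle_eq_pi h₁₃.angle₁₂₃_eq_pi h₂₄.angle₁₂₃_eq_pi).symm
  have w₂₃ : ∠ x₂ P x₃ = π - ∠ x₁ P x₂ := by
    have := EuclideanGeometry.angle_add_angle_eq_pi_of_angle_eq_pi x₂ h₁₃.angle₁₂₃_eq_pi
    rw [angle_comm x₂ P x₁] at this
    linarith
  have w₁₄ : ∠ x₁ P x₄ = π - ∠ x₁ P x₂ := by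
    have := EuclideanGeometry.angle_add_angle_eq_pi_of_angle_eq_pi x₁ h₂₄.angle₁₂₃_eq_pi
    linarith
  have l₁₃ : dist x₁ x₃ = dist x₁ P + dist x₃ P := by
    rw [dist_comm x₃ P]; exact h₁₃.wbtw.dist_add_dist.symm
  have l₂₄ : dist x₂ x₄ = dist x₂ P + dist x₄ P := by
    rw [dist_comm x₄ P]; exact h₂₄.wbtw.dist_add_dist.symm
  obtain ⟨a₁₂, e₁₂, cp₁, sp₁, cq₂, sq₂⟩ := small_triangle m₁ m₂
  obtain ⟨a₂₃, e₂₃, cp₂, sp₂, cq₃, sq₃⟩ := small_triangle m₂ m₃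
  obtain ⟨a₃₄, e₃₄, cp₃, sp₃, cq₄, sq₄⟩ := small_triangle m₃ m₄
  obtain ⟨a₁₄, e₁₄, cq₁, sq₁, cp₄, sp₄⟩ := small_triangle m₁ m₄
  rw [w₂₃] at a₂₃ e₂₃ cp₂ sp₂ cq₃ sq₃
  rw [w₃₄] at a₃₄ e₃₄ cp₃ sp₃ cq₄ sq₄
  rw [w₁₄] at a₁₄ e₁₄ cq₁ sq₁ cp₄ sp₄
  rw [cos_pi_sub] at e₂₃ cp₂ cq₃ e₁₄ cq₁ cp₄
  rw [sin_pi_sub] at sp₂ sq₃ sq₁ sp₄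
  have r₁₂ : dist x₁ x₂ ≠ 0 := dist_ne_zero.2 n₁₂
  have r₂₃ : dist x₂ x₃ ≠ 0 := dist_ne_zero.2 n₂₃
  have r₃₄ : dist x₃ x₄ ≠ 0 := dist_ne_zero.2 n₃₄
  have r₁₄ : dist x₁ x₄ ≠ 0 := dist_ne_zero.2 n₁₄
  have r₁₃ : dist x₁ P + dist x₃ P ≠ 0 := l₁₃ ▸ dist_ne_zero.2 h₁₃.left_ne_right
  have r₂₄ : dist x₂ P + dist x₄ P ≠ 0 := l₂₄ ▸ dist_ne_zero.2 h₂₄.left_ne_right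
  rw [l₁₃, l₂₄]
  rw [delta3_of_triangle (α := ∠ P x₁ x₂) (γ := ∠ P x₃ x₂) r₁₂ r₁₃ r₂₃ (by linarith) (by linarith),
    delta3_swap (dist x₁ P + dist x₃ P) (dist x₁ x₄) (dist x₃ x₄),
    delta3_of_triangle (α := ∠ P x₁ x₄) (γ := ∠ P x₃ x₄) r₁₄ r₁₃ r₃₄ (by linarith) (by linarith),
    ← delta3_rotate (dist x₂ P + dist x₄ P), delta3_swap (dist x₂ P + dist x₄ P),
    delta3_of_triangle (α := ∠ P x₂ x₁) (γ := ∠ P x₄ x₁) r₁₂ r₂₄ r₁₄ (by linarith) (by linarith),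
    delta3_of_triangle (α := ∠ P x₂ x₃) (γ := ∠ P x₄ x₃) r₂₃ r₂₄ r₃₄ (by linarith) (by linarith),
    delta3_crelle (p₂ := ∠ P x₂ x₃) (p₃ := ∠ P x₃ x₄) (p₄ := ∠ P x₄ x₁) (q₁ := ∠ P x₁ x₄)
      (q₂ := ∠ P x₂ x₁) (q₄ := ∠ P x₄ x₃) r₁₃ r₂₄ r₁₂ r₂₃ r₃₄ r₁₄ (sin_sq_add_cos_sq (∠ x₁ P x₂))
      e₁₂ (by linarith) e₃₄ (by linarith) cq₂ sq₂ (by linarith) sp₂ cp₃ sp₃ cq₄ sq₄ (by linarith)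
      sp₄ (by linarith) sq₁]
  exact sum_cos_ge (ω := ∠ x₁ P x₂) (angle_nonneg _ _ _) (angle_nonneg _ _ _) (angle_nonneg _ _ _)
    (angle_nonneg _ _ _) (angle_nonneg _ _ _) (angle_nonneg _ _ _) (angle_nonneg _ _ _)
    (angle_nonneg _ _ _) a₁₂ (by linarith) a₃₄ (by linarith)

/-- For a strictly convex quadrilateral, the sum of `δ` over the four triangles formed by
triples of vertices is at least `δ` of the associated Crelle triangle. -/
theorem sum_delta_ge_delta_crelle (x₁ x₂ x₃ x₄ : EuclideanSpace ℝ (Fin 2))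
    (h : IsStrictConvexQuad x₁ x₂ x₃ x₄) :
    delta3 (dist x₁ x₂) (dist x₁ x₃) (dist x₂ x₃) +
      delta3 (dist x₁ x₃) (dist x₁ x₄) (dist x₃ x₄) +
      delta3 (dist x₁ x₂) (dist x₁ x₄) (dist x₂ x₄) +
      delta3 (dist x₂ x₃) (dist x₂ x₄) (dist x₃ x₄) ≥
    delta3 (dist x₁ x₂ * dist x₃ x₄) (dist x₁ x₃ * dist x₂ x₄) (dist x₁ x₄ * dist x₂ x₃) := by
  obtain ⟨n₁₂₃, n₁₂₄, n₁₃₄, n₂₃₄, -, -, -, -, P, hP, hP'⟩ := h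
  rw [mem_segment_iff_wbtw] at hP hP'
  -- If `P` were a vertex, that vertex would lie on the other diagonal, making three vertices collinear.
  have c₁ : P ≠ x₁ := by
    rintro rfl
    exact n₁₂₄ (by rw [Set.insert_comm]; exact hP'.collinear)
  have c₃ : P ≠ x₃ := by
    rintro rfl
    exact n₂₃₄ hP'.collinear
  have c₂ : P ≠ x₂ := by
    rintro rfl
    exact n₁₂₃ hP.collinear
  have c₄ : P ≠ x₄ := by
    rintro rfl
    exact n₁₃₄ (by rw [Set.pair_comm]; exact hP.collinear)
  refine sum_delta_ge_of_sbtw ⟨hP, c₁, c₃⟩ ⟨hP', c₂, c₄⟩ ?_ ?_ ?_ ?_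
  · rintro rfl
    exact n₁₂₃ (by simpa using collinear_pair ℝ x₁ x₃)
  · rintro rfl
    exact n₁₂₃ (by simpa using collinear_pair ℝ x₁ x₂)
  · rintro rfl
    exact n₁₃₄ (by simpa using collinear_pair ℝ x₁ x₃)
  · rintro rfl
    exact n₁₂₄ (by simpa [Set.pair_comm] using collinear_pair ℝ x₁ x₂)
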